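/- Let P_1, ..., P_m be pairwise commuting orthogonal projections on a Hilbert space ℋ, and let ξ_1, ..., ξ_m ∈ ℋ satisfy P_1 P_2 ⋯ P_m ξ_i = 0 for all 1 ≤ i ≤ m. Then ‖P_1 ξ_1 + ... + P_m ξ_m‖² ≤ (m-1) · Σ_{i=1}^m ‖ξ_i‖². -/

import Mathlib

/-!
Write `y = ∑ Pᵢ ξᵢ`. Symmetry of the `Pᵢ` gives `‖y‖² = ∑ ⟪ξᵢ, Pᵢ y⟫`, so by Cauchy–Schwarz it is
enough to bound `∑ ‖Pᵢ y‖²` by `(m - 1) ‖y‖²`. For commuting projections with product `Q` one has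
the union bound `1 - Q ≤ ∑ (1 - Pᵢ)`, that is `∑ ‖Pᵢ y‖² ≤ (m - 1) ‖y‖² + ‖Q y‖²`: adjoining a
projection `A` to a product `B` costs at most `‖x - A x‖²`, since `B x - A B x = B (x - A x)` and
`B` is a contraction. Finally `Q y = 0` because `Q Pᵢ = Q`.
-/

open Finset Function

section NoncommProd

variable {ι M : Type*} [Monoid M]

lemma noncommProd_mul_eq_self_of_isIdempotentElem {s : Finset ι} {f : ι → M}
    (hcomm : (s : Set ι).Pairwise (Commute on f)) {i : ι} (hi : i ∈ s)
    (hf : IsIdempotentElem (f i)) :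
    s.noncommProd f hcomm * f i = s.noncommProd f hcomm := by
  classical
  rw [← noncommProd_erase_mul s hi f hcomm, mul_assoc, hf.eq]

lemma noncommProd_univ_eq_prod_ofFn {n : ℕ} (f : Fin n → M)
    (hcomm : ((univ : Finset (Fin n)) : Set (Fin n)).Pairwise (Commute on f)) :
    univ.noncommProd f hcomm = (List.ofFn f).prod := by
  simp [noncommProd, Fin.univ_def, List.ofFn_eq_map]

end NoncommProd

lemma noncommProd_toLinearMap_eq_prod_ofFn {R E : Type*} [Semiring R] [TopologicalSpace E]
    [AddCommMonoid E] [ContinuousAdd E] [Module R E] {n : ℕ} (T : Fin n → E →L[R] E)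
    (hcomm : ∀ i j, Commute (T i) (T j)) :
    univ.noncommProd (fun i ↦ (T i : E →ₗ[R] E))
        (fun i _ j _ _ ↦ (hcomm i j).map ContinuousLinearMap.toLinearMapRingHom) =
      ((List.ofFn T).prod : E →L[R] E) := by
  rw [← noncommProd_univ_eq_prod_ofFn T fun i _ j _ _ ↦ hcomm i j]
  exact (map_noncommProd univ T _ ContinuousLinearMap.toLinearMapRingHom).symm

lemma norm_noncommProd_apply_le {ι R E : Type*} [Semiring R] [SeminormedAddCommGroup E] [Module R E]
    {s : Finset ι} {T : ι → E →ₗ[R] E} (hcomm : (s : Set ι).Pairwise (Commute on T))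
    (hT : ∀ i ∈ s, ∀ x, ‖T i x‖ ≤ ‖x‖) (x : E) :
    ‖s.noncommProd T hcomm x‖ ≤ ‖x‖ :=
  noncommProd_induction s T hcomm (fun A ↦ ∀ x, ‖A x‖ ≤ ‖x‖)
    (fun _ B hA hB x ↦ (hA (B x)).trans (hB x)) (fun _ ↦ le_rfl) hT x

section InnerProductSpace

variable {𝕜 E ι : Type*} [RCLike 𝕜] [SeminormedAddCommGroup E] [InnerProductSpace 𝕜 E]

lemma norm_sq_apply_add_norm_sq_sub_apply {A : E →ₗ[𝕜] E} (hA : A.IsSymmetricProjection) (x : E) :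
    ‖A x‖ ^ 2 + ‖x - A x‖ ^ 2 = ‖x‖ ^ 2 := by
  have apply_apply : A (A x) = A x := LinearMap.congr_fun hA.isIdempotentElem.eq x
  have orthogonal : inner 𝕜 (A x) (x - A x) = 0 := by
    rw [hA.isSymmetric, map_sub, apply_apply, sub_self, inner_zero_right]
  have pythagoras := norm_add_sq_eq_norm_sq_add_norm_sq_of_inner_eq_zero _ _ orthogonal
  rw [add_sub_cancel] at pythagoras
  linarith

lemma norm_apply_le_of_isSymmetricProjection {A : E →ₗ[𝕜] E} (hA : A.IsSymmetricProjection)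
    (x : E) : ‖A x‖ ≤ ‖x‖ := by
  refine le_of_sq_le_sq ?_ (norm_nonneg x)
  linarith [norm_sq_apply_add_norm_sq_sub_apply hA x, sq_nonneg ‖x - A x‖]

lemma norm_sq_apply_add_norm_sq_apply_le_of_commute {A B : E →ₗ[𝕜] E}
    (hA : A.IsSymmetricProjection) (hB : ∀ x, ‖B x‖ ≤ ‖x‖) (hAB : Commute A B) (x : E) :
    ‖A x‖ ^ 2 + ‖B x‖ ^ 2 ≤ ‖x‖ ^ 2 + ‖A (B x)‖ ^ 2 := by
  have apply_comm : A (B x) = B (A x) := LinearMap.congr_fun hAB.eq x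
  have sub_le : ‖B x - A (B x)‖ ^ 2 ≤ ‖x - A x‖ ^ 2 := by
    rw [apply_comm, ← map_sub]
    gcongr
    exact hB _
  linarith [norm_sq_apply_add_norm_sq_sub_apply hA x,
    norm_sq_apply_add_norm_sq_sub_apply hA (B x)]

lemma sum_norm_sq_apply_le_of_commute {s : Finset ι} {P : ι → E →ₗ[𝕜] E}
    (hP : ∀ i ∈ s, (P i).IsSymmetricProjection) (hcomm : (s : Set ι).Pairwise (Commute on P))
    (x : E) :
    ∑ i ∈ s, ‖P i x‖ ^ 2 ≤ ((#s : ℝ) - 1) * ‖x‖ ^ 2 + ‖s.noncommProd P hcomm x‖ ^ 2 := by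
  induction s using Finset.cons_induction with
  | empty => simp
  | cons i s hi ih =>
    rw [forall_mem_cons] at hP
    have hcomm_s : (s : Set ι).Pairwise (Commute on P) := hcomm.mono (by simp)
    have contraction (z : E) : ‖s.noncommProd P hcomm_s z‖ ≤ ‖z‖ :=
      norm_noncommProd_apply_le hcomm_s
        (fun j hj ↦ norm_apply_le_of_isSymmetricProjection (hP.2 j hj)) z
    have commute_prod : Commute (P i) (s.noncommProd P hcomm_s) :=
      noncommProd_commute s P hcomm_s _ fun j hj ↦
        hcomm (by simp) (by simp [hj]) (ne_of_mem_of_not_mem hj hi).symm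
    have two_factors :=
      norm_sq_apply_add_norm_sq_apply_le_of_commute hP.1 contraction commute_prod x
    rw [sum_cons, card_cons, noncommProd_cons, Module.End.mul_apply]
    push_cast
    linarith [ih hP.2 hcomm_s]

lemma norm_sq_sum_apply_eq_sum_inner {s : Finset ι} {T : ι → E →ₗ[𝕜] E}
    (hT : ∀ i ∈ s, (T i).IsSymmetric) (ξ : ι → E) :
    ((‖∑ i ∈ s, T i (ξ i)‖ ^ 2 : ℝ) : 𝕜) =
      ∑ i ∈ s, inner 𝕜 (ξ i) (T i (∑ j ∈ s, T j (ξ j))) := by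
  rw [RCLike.ofReal_pow, ← inner_self_eq_norm_sq_to_K (𝕜 := 𝕜), sum_inner]
  exact sum_congr rfl fun i hi ↦ hT i hi _ _

lemma norm_sq_sum_apply_le_sum_norm_mul_norm {s : Finset ι} {T : ι → E →ₗ[𝕜] E}
    (hT : ∀ i ∈ s, (T i).IsSymmetric) (ξ : ι → E) :
    ‖∑ i ∈ s, T i (ξ i)‖ ^ 2 ≤ ∑ i ∈ s, ‖ξ i‖ * ‖T i (∑ j ∈ s, T j (ξ j))‖ := by
  calc ‖∑ i ∈ s, T i (ξ i)‖ ^ 2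
      = ‖∑ i ∈ s, inner 𝕜 (ξ i) (T i (∑ j ∈ s, T j (ξ j)))‖ := by
        rw [← norm_sq_sum_apply_eq_sum_inner hT, RCLike.norm_of_nonneg (sq_nonneg _)]
    _ ≤ ∑ i ∈ s, ‖ξ i‖ * ‖T i (∑ j ∈ s, T j (ξ j))‖ :=
        norm_sum_le_of_le s fun i _ ↦ norm_inner_le_norm _ _

lemma norm_sq_sum_apply_le_of_sum_norm_sq_apply_le {s : Finset ι} {T : ι → E →ₗ[𝕜] E}
    (hT : ∀ i ∈ s, (T i).IsSymmetric) (ξ : ι → E) {C : ℝ} (hC : 0 ≤ C)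
    (hbound : ∑ i ∈ s, ‖T i (∑ j ∈ s, T j (ξ j))‖ ^ 2 ≤ C * ‖∑ j ∈ s, T j (ξ j)‖ ^ 2) :
    ‖∑ i ∈ s, T i (ξ i)‖ ^ 2 ≤ C * ∑ i ∈ s, ‖ξ i‖ ^ 2 := by
  have norm_sq_le := norm_sq_sum_apply_le_sum_norm_mul_norm hT ξ
  set y := ∑ i ∈ s, T i (ξ i)
  have mul_norm_sq_le : ‖y‖ ^ 2 * ‖y‖ ^ 2 ≤ (C * ∑ i ∈ s, ‖ξ i‖ ^ 2) * ‖y‖ ^ 2 :=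
    calc ‖y‖ ^ 2 * ‖y‖ ^ 2
        = (‖y‖ ^ 2) ^ 2 := (sq _).symm
      _ ≤ (∑ i ∈ s, ‖ξ i‖ * ‖T i y‖) ^ 2 := by gcongr
      _ ≤ (∑ i ∈ s, ‖ξ i‖ ^ 2) * ∑ i ∈ s, ‖T i y‖ ^ 2 := sum_mul_sq_le_sq_mul_sq _ _ _
      _ ≤ (∑ i ∈ s, ‖ξ i‖ ^ 2) * (C * ‖y‖ ^ 2) := by gcongr
      _ = (C * ∑ i ∈ s, ‖ξ i‖ ^ 2) * ‖y‖ ^ 2 := by ring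
  rcases (sq_nonneg ‖y‖).eq_or_lt with hy | hy
  · rw [← hy]
    positivity
  · exact le_of_mul_le_mul_right mul_norm_sq_le hy

theorem norm_sq_sum_proj_le_general {s : Finset ι} {P : ι → E →ₗ[𝕜] E}
    (hP : ∀ i ∈ s, (P i).IsSymmetricProjection) (hcomm : (s : Set ι).Pairwise (Commute on P))
    (ξ : ι → E) (hker : s.noncommProd P hcomm (∑ i ∈ s, ξ i) = 0) :
    ‖∑ i ∈ s, P i (ξ i)‖ ^ 2 ≤ ((#s : ℝ) - 1) * ∑ i ∈ s, ‖ξ i‖ ^ 2 := by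
  rcases s.eq_empty_or_nonempty with rfl | hs
  · simp
  have one_le_card : (1 : ℝ) ≤ #s := by exact_mod_cast hs.card_pos
  have prod_apply_apply (i) (hi : i ∈ s) :
      s.noncommProd P hcomm (P i (ξ i)) = s.noncommProd P hcomm (ξ i) :=
    LinearMap.congr_fun
      (noncommProd_mul_eq_self_of_isIdempotentElem hcomm hi (hP i hi).isIdempotentElem) (ξ i)
  have prod_sum_eq_zero : s.noncommProd P hcomm (∑ i ∈ s, P i (ξ i)) = 0 := by
    rw [map_sum, sum_congr rfl prod_apply_apply, ← map_sum, hker]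
  refine norm_sq_sum_apply_le_of_sum_norm_sq_apply_le (fun i hi ↦ (hP i hi).isSymmetric) ξ
    (sub_nonneg.2 one_le_card) ?_
  simpa [prod_sum_eq_zero] using sum_norm_sq_apply_le_of_commute hP hcomm (∑ i ∈ s, P i (ξ i))

end InnerProductSpace

/-- If `P 0, …, P (m-1)` are pairwise commuting orthogonal projections on a Hilbert
space and `ξ 0, …, ξ (m-1)` are vectors with `P 0 * P 1 * ⋯ * P (m-1)` killing each
`ξ i`, then `‖∑ i, P i (ξ i)‖² ≤ (m - 1) * ∑ i, ‖ξ i‖²`. -/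
theorem norm_sq_sum_proj_le
    {𝕜 H : Type*} [RCLike 𝕜] [NormedAddCommGroup H] [InnerProductSpace 𝕜 H]
    [CompleteSpace H]
    (m : ℕ) (P : Fin m → H →L[𝕜] H)
    (hsa : ∀ i, IsSelfAdjoint (P i))
    (hidem : ∀ i, IsIdempotentElem (P i))
    (hcomm : ∀ i j, Commute (P i) (P j))
    (ξ : Fin m → H)
    (hker : ∀ i, (List.ofFn P).prod (ξ i) = 0) :
    ‖∑ i, P i (ξ i)‖ ^ 2 ≤ ((m : ℝ) - 1) * ∑ i, ‖ξ i‖ ^ 2 := by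
  simpa using norm_sq_sum_proj_le_general (s := univ)
    (fun i _ ↦ ContinuousLinearMap.IsStarProjection.isSymmetricProjection ⟨hidem i, hsa i⟩) _ ξ
    ((LinearMap.congr_fun (noncommProd_toLinearMap_eq_prod_ofFn P hcomm) _).trans (by simp [hker]))
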